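/- For every integer n ≥ 1 and every edge e of C_{2n+1} ∨ O_{2n} that is not an edge of the cycle C_{2n+1} (i.e., e is a join edge), χ_la((C_{2n+1} ∨ O_{2n}) − e) = 4. -/

import Mathlib

open Finset SimpleGraph
open scoped Classical

/-- The induced vertex label (weight) of `x`: the sum of `f` over all edges incident to `x`. -/
noncomputable def vertexWeight {V : Type*} [Fintype V] (G : SimpleGraph V)
    (f : Sym2 V → ℕ) (x : V) : ℕ :=
  ∑ e ∈ G.edgeFinset.filter (fun e => x ∈ e), f e

/-- `f` is a local antimagic labeling of `G`: it restricts to a bijection from the edge set of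
`G` onto `{1, …, q}` (where `q` is the number of edges), and adjacent vertices get distinct
induced vertex labels. -/
def IsLocalAntimagic {V : Type*} [Fintype V] (G : SimpleGraph V) (f : Sym2 V → ℕ) : Prop :=
  Set.BijOn f G.edgeSet (Set.Icc 1 G.edgeSet.ncard) ∧
  ∀ ⦃x y : V⦄, G.Adj x y → vertexWeight G f x ≠ vertexWeight G f y

/-- The number of distinct induced vertex labels, `c(f)`. -/
noncomputable def colorCount {V : Type*} [Fintype V] (G : SimpleGraph V)
    (f : Sym2 V → ℕ) : ℕ :=
  (Finset.univ.image (vertexWeight G f)).card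

/-- The local antimagic chromatic number `χ_la(G)`. -/
noncomputable def chiLA {V : Type*} [Fintype V] (G : SimpleGraph V) : ℕ :=
  sInf { n | ∃ f : Sym2 V → ℕ, IsLocalAntimagic G f ∧ colorCount G f = n }

/-- The join `G ∨ H` of two vertex-disjoint graphs. -/
def joinG {α β : Type*} (G : SimpleGraph α) (H : SimpleGraph β) : SimpleGraph (α ⊕ β) :=
  SimpleGraph.fromRel (fun x y =>
    (∃ a b, x = Sum.inl a ∧ y = Sum.inl b ∧ G.Adj a b) ∨
    (∃ a b, x = Sum.inr a ∧ y = Sum.inr b ∧ H.Adj a b) ∨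
    (∃ a b, x = Sum.inl a ∧ y = Sum.inr b))


theorem vertexWeight_eq {V : Type*} [Fintype V] (G : SimpleGraph V)
    (f : Sym2 V → ℕ) (x : V) :
    vertexWeight G f x = ∑ y : V, if G.Adj x y then f s(x, y) else 0 := by
  rw [← Finset.sum_filter]
  unfold vertexWeight
  symm
  refine Finset.sum_bij (fun y _ => s(x, y)) ?_ ?_ ?_ ?_
  · intro y hy
    simpa using hy
  · intro y _ z _ h
    exact Sym2.congr_right.mp h
  · intro e he
    simp only [Finset.mem_filter, SimpleGraph.mem_edgeFinset] at he
    obtain ⟨h1, h2⟩ := he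
    obtain ⟨y, rfl⟩ := h2
    exact ⟨y, by simpa using h1, rfl⟩
  · intro y _
    rfl

/-- Entry of the magic square. -/
def sqVal (n : ℕ) (i j : Fin (2 * n + 1)) : ℕ :=
  (2 * n + 1) * (i + j).val + (j - i - 1).val

theorem sqVal_inj (n : ℕ) (i j i' j' : Fin (2 * n + 1)) (h : sqVal n i j = sqVal n i' j') :
    i = i' ∧ j = j' := by
  unfold sqVal at h
  have h1 : (i + j) = (i' + j') := by
    have := congrArg (· / (2 * n + 1)) h
    simp only [Nat.mul_add_div (Nat.succ_pos (2 * n)), Nat.div_eq_of_lt (Fin.is_lt _)] at this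
    exact Fin.ext this
  have h2 : j - i - 1 = j' - i' - 1 := by
    rw [h1] at h
    exact Fin.ext (by omega)
  have h3 : j - i = j' - i' := by simpa using h2
  have h4 : (2 : ℕ) • j = (2 : ℕ) • j' := by
    have e1 : (2 : ℕ) • j = (i + j) + (j - i) := by abel
    have e2 : (2 : ℕ) • j' = (i' + j') + (j' - i') := by abel
    rw [e1, e2, h1, h3]
  have key : ∀ k : Fin (2 * n + 1), (n + 1) • ((2 : ℕ) • k) = k := by
    intro k
    have : Fintype.card (Fin (2 * n + 1)) • k = 0 := card_nsmul_eq_zero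
    rw [Fintype.card_fin] at this
    rw [← mul_nsmul, show 2 * (n + 1) = (2 * n + 1) + 1 by ring, add_nsmul, this]
    simp
  have h5 : j = j' := by rw [← key j, h4, key]
  subst h5
  exact ⟨by simpa using h1, rfl⟩

theorem sqVal_lt (n : ℕ) (i j : Fin (2 * n + 1)) : sqVal n i j < (2 * n + 1) * (2 * n + 1) := by
  unfold sqVal
  have h1 := (i + j).is_lt
  have h2 := (j - i - 1).is_lt
  nlinarith

theorem sum_val (n : ℕ) : ∑ i : Fin (2 * n + 1), i.val = n * (2 * n + 1) := by
  rw [Fin.sum_univ_eq_sum_range (fun i => i) (2 * n + 1)]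
  have := Finset.sum_range_id_mul_two (2 * n + 1)
  simp only [Nat.add_sub_cancel] at this
  nlinarith

theorem sqVal_row (n : ℕ) (i : Fin (2 * n + 1)) :
    ∑ j, sqVal n i j = 2 * n * (n + 1) * (2 * n + 1) := by
  unfold sqVal
  rw [Finset.sum_add_distrib, ← Finset.mul_sum]
  have h1 := Equiv.sum_comp (Equiv.addLeft i) (fun j : Fin (2 * n + 1) => j.val)
  have h2 := Equiv.sum_comp (Equiv.subRight (i + 1)) (fun j : Fin (2 * n + 1) => j.val)
  simp only [Equiv.coe_addLeft, Equiv.subRight_apply] at h1 h2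
  simp only [sub_sub, h1, h2, sum_val]
  ring

theorem sqVal_col (n : ℕ) (j : Fin (2 * n + 1)) :
    ∑ i, sqVal n i j = 2 * n * (n + 1) * (2 * n + 1) := by
  unfold sqVal
  rw [Finset.sum_add_distrib, ← Finset.mul_sum]
  have h1 := Equiv.sum_comp (Equiv.addRight j) (fun j : Fin (2 * n + 1) => j.val)
  have h2 := Equiv.sum_comp (Equiv.subLeft (j - 1)) (fun j : Fin (2 * n + 1) => j.val)
  simp only [Equiv.coe_addRight, Equiv.subLeft_apply] at h1 h2
  simp only [sub_right_comm _ _ (1 : Fin (2 * n + 1)), h1, h2, sum_val]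
  ring

theorem sqVal_zero (n : ℕ) (i : Fin (2 * n + 1)) : sqVal n i 0 = 2 * n * (i.val + 1) := by
  unfold sqVal
  have h := i.is_lt
  have h0 : (0 - i - 1 : Fin (2 * n + 1)) = Fin.rev i := by
    rw [zero_sub, sub_eq_iff_eq_add, neg_eq_iff_add_eq_zero]
    have h3 : (i + (i.rev + 1)) = (i + i.rev) + 1 := by abel
    rw [h3]
    apply Fin.ext
    simp only [Fin.val_add, Fin.val_rev, Fin.val_one', Fin.val_zero]
    rw [show i.val + (2 * n + 1 - (i.val + 1)) = 2 * n by omega]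
    simp
  rw [h0, Fin.val_rev, add_zero]
  have : 2 * n + 1 - (i.val + 1) = 2 * n - i.val := by omega
  rw [this]
  zify [show i.val ≤ 2 * n by omega]
  ring

/-- The involution matching rows to cycle vertices. -/
def dFun (n : ℕ) (t : Fin (2 * n + 1)) : Fin (2 * n + 1) :=
  if h : t.val = 2 * n then t
  else if h2 : t.val % 2 = 0 then ⟨t.val + 1, by have := t.is_lt; omega⟩
  else ⟨t.val - 1, by have := t.is_lt; omega⟩

theorem dFun_val (n : ℕ) (t : Fin (2 * n + 1)) : (dFun n t).val =
    if t.val = 2 * n then t.val else if t.val % 2 = 0 then t.val + 1 else t.val - 1 := by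
  unfold dFun; split_ifs <;> rfl

theorem dFun_invol (n : ℕ) (t : Fin (2 * n + 1)) : dFun n (dFun n t) = t := by
  apply Fin.ext
  have := t.is_lt
  rw [dFun_val, dFun_val]
  split_ifs <;> omega

/-- The order of the cycle labels. -/
def xFun (n : ℕ) (t : Fin (2 * n + 1)) : Fin (2 * n + 1) :=
  if h2 : t.val % 2 = 0 then ⟨t.val / 2, by have := t.is_lt; omega⟩
  else ⟨n + 1 + t.val / 2, by have := t.is_lt; omega⟩

theorem xFun_val (n : ℕ) (t : Fin (2 * n + 1)) : (xFun n t).val =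
    if t.val % 2 = 0 then t.val / 2 else n + 1 + t.val / 2 := by
  unfold xFun; split_ifs <;> rfl

theorem xFun_inj (n : ℕ) : Function.Injective (xFun n) := by
  intro s t h
  have h := congrArg Fin.val h
  have := t.is_lt
  have := s.is_lt
  rw [xFun_val, xFun_val] at h
  apply Fin.ext
  split_ifs at h <;> omega

theorem val_add_one (n : ℕ) (t : Fin (2 * n + 1)) :
    (t + 1).val = if t.val = 2 * n then 0 else t.val + 1 := by
  rw [Fin.val_add_one]
  congr 1
  simp [Fin.ext_iff]

theorem xFun_add (n : ℕ) (t : Fin (2 * n + 1)) :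
    (xFun n t).val + (xFun n (t + 1)).val = n + (t + 1).val := by
  have := t.is_lt
  rw [xFun_val, xFun_val, val_add_one]
  split_ifs <;> omega

theorem sqVal_eq_zero (n : ℕ) (hn : 1 ≤ n) (h : n < 2 * n) (h' : n < 2 * n + 1) :
    sqVal n ⟨n, h'⟩ (Fin.succ ⟨n, h⟩) = 0 := by
  have h1 : (⟨n, h'⟩ + Fin.succ ⟨n, h⟩ : Fin (2 * n + 1)) = 0 := by
    apply Fin.ext
    simp [Fin.val_add, show n + (n + 1) = 2 * n + 1 by ring]
  have h2 : (Fin.succ ⟨n, h⟩ - ⟨n, h'⟩ - 1 : Fin (2 * n + 1)) = 0 := by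
    rw [sub_sub, sub_eq_zero]
    apply Fin.ext
    rw [val_add_one]
    simp
    omega
  unfold sqVal
  rw [h1, h2]
  simp

/-- The full join graph. -/
abbrev HG (n : ℕ) : SimpleGraph (Fin (2 * n + 1) ⊕ Fin (2 * n)) :=
  joinG (cycleGraph (2 * n + 1)) (⊥ : SimpleGraph (Fin (2 * n)))

theorem one_ne_zero_fin (n : ℕ) (hn : 1 ≤ n) : (1 : Fin (2 * n + 1)) ≠ 0 := by
  intro h
  have := congrArg Fin.val h
  rw [Fin.val_one', Nat.mod_eq_of_lt (by omega)] at this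
  simp at this

theorem two_ne_zero_fin (n : ℕ) (hn : 1 ≤ n) : (1 + 1 : Fin (2 * n + 1)) ≠ 0 := by
  intro h
  have := congrArg Fin.val h
  rw [val_add_one, Fin.val_one', Nat.mod_eq_of_lt (by omega)] at this
  split_ifs at this <;> simp at this
  omega

theorem cyc_adj (n : ℕ) (hn : 1 ≤ n) (u v : Fin (2 * n + 1)) :
    (cycleGraph (2 * n + 1)).Adj u v ↔ (v = u + 1 ∨ u = v + 1) := by
  rw [cycleGraph_eq_circulantGraph]
  have h1 := one_ne_zero_fin n hn
  simp only [circulantGraph, SimpleGraph.fromRel_adj, Set.mem_singleton_iff, sub_eq_iff_eq_add]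
  constructor
  · rintro ⟨_, h | h⟩
    · right; rw [h]; exact add_comm _ _
    · left; rw [h]; exact add_comm _ _
  · rintro (h | h)
    · exact ⟨by rw [h]; simpa using h1, Or.inr (by rw [h]; exact add_comm _ _)⟩
    · exact ⟨by rw [h]; simpa using h1, Or.inl (by rw [h]; exact add_comm _ _)⟩

theorem HG_ll (n : ℕ) (hn : 1 ≤ n) (u v : Fin (2 * n + 1)) :
    (HG n).Adj (Sum.inl u) (Sum.inl v) ↔ (v = u + 1 ∨ u = v + 1) := by
  rw [← cyc_adj n hn]
  simp only [joinG, SimpleGraph.fromRel_adj]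
  constructor
  · rintro ⟨_, h⟩
    simpa [SimpleGraph.adj_comm _ v u] using h
  · intro h
    exact ⟨by simpa using h.ne, by simp [h]⟩

theorem HG_lr (n : ℕ) (u : Fin (2 * n + 1)) (v : Fin (2 * n)) :
    (HG n).Adj (Sum.inl u) (Sum.inr v) := by
  simp [joinG, SimpleGraph.fromRel_adj]

theorem HG_rr (n : ℕ) (u v : Fin (2 * n)) :
    ¬ (HG n).Adj (Sum.inr u) (Sum.inr v) := by
  simp [joinG, SimpleGraph.fromRel_adj]

/-- Enumeration of the edges. -/
def edgeMap (n : ℕ) : Fin (2 * n + 1) ⊕ (Fin (2 * n + 1) × Fin (2 * n)) →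
    Sym2 (Fin (2 * n + 1) ⊕ Fin (2 * n))
  | Sum.inl v => s(Sum.inl v, Sum.inl (v + 1))
  | Sum.inr p => s(Sum.inl p.1, Sum.inr p.2)

theorem edgeMap_inj (n : ℕ) (hn : 1 ≤ n) : Function.Injective (edgeMap n) := by
  have h2 := two_ne_zero_fin n hn
  rintro (u | ⟨u, j⟩) (v | ⟨v, k⟩) h
  · simp only [edgeMap, Sym2.eq_iff, Sum.inl.injEq] at h
    rcases h with h | ⟨h, h'⟩
    · rw [h.1]
    · exfalso
      rw [h, add_assoc] at h'
      exact h2 (by simpa using h')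
  · simp [edgeMap] at h
  · simp [edgeMap] at h
  · simp [edgeMap] at h
    simp [h]

theorem range_edgeMap (n : ℕ) (hn : 1 ≤ n) : Set.range (edgeMap n) = (HG n).edgeSet := by
  ext e
  constructor
  · rintro ⟨(u | ⟨u, j⟩), rfl⟩
    · simp only [edgeMap, SimpleGraph.mem_edgeSet]
      rw [HG_ll n hn]; left; rfl
    · simp only [edgeMap, SimpleGraph.mem_edgeSet]
      exact HG_lr n u j
  · induction e using Sym2.ind with
    | _ x y =>
      intro h
      rw [SimpleGraph.mem_edgeSet] at h
      rcases x with u | j <;> rcases y with v | k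
      · rw [HG_ll n hn] at h
        rcases h with h | h
        · exact ⟨Sum.inl u, by simp [edgeMap, h]⟩
        · exact ⟨Sum.inl v, by simp [edgeMap, h]⟩
      · exact ⟨Sum.inr (u, k), rfl⟩
      · exact ⟨Sum.inr (v, j), by simp [edgeMap]⟩
      · exact absurd h (HG_rr n j k)

section lab
variable (n : ℕ) (a : Fin (2 * n + 1)) (b : Fin (2 * n))

/-- The position `n` among the columns. -/
def midCol (n : ℕ) (b : Fin (2 * n)) : Fin (2 * n) := ⟨n, by have := b.is_lt; omega⟩

/-- The position `n` among the rows. -/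
def midRow (n : ℕ) : Fin (2 * n + 1) := ⟨n, by omega⟩

/-- The cyclic position of a cycle vertex. -/
def pos (n : ℕ) (a v : Fin (2 * n + 1)) : Fin (2 * n + 1) := v - a + dFun n (midRow n)

/-- The values of the labeling on the enumerated edges. -/
def labVal : Fin (2 * n + 1) ⊕ (Fin (2 * n + 1) × Fin (2 * n)) → ℕ
  | Sum.inl v => sqVal n (xFun n (pos n a v)) 0
  | Sum.inr p => sqVal n (dFun n (pos n a p.1)) (Fin.succ (Equiv.swap b (midCol n b) p.2))

/-- The labeling. -/
noncomputable def lab : Sym2 (Fin (2 * n + 1) ⊕ Fin (2 * n)) → ℕ :=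
  Function.extend (edgeMap n) (labVal n a b) 0

theorem pos_inj : Function.Injective (pos n a) := by
  intro u v h
  simpa [pos] using h

theorem pos_succ (v : Fin (2 * n + 1)) : pos n a (v + 1) = pos n a v + 1 := by
  unfold pos; abel

theorem d_inj : Function.Injective (dFun n) :=
  Function.LeftInverse.injective (g := dFun n) (dFun_invol n)

theorem labVal_inj : Function.Injective (labVal n a b) := by
  rintro (u | ⟨u, j⟩) (v | ⟨v, k⟩) h
  · have := (sqVal_inj n _ _ _ _ h).1
    rw [pos_inj n a (xFun_inj n this)]
  · have := (sqVal_inj n _ _ _ _ h).2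
    exact absurd this.symm (Fin.succ_ne_zero _)
  · have := (sqVal_inj n _ _ _ _ h).2
    exact absurd this (Fin.succ_ne_zero _)
  · obtain ⟨h1, h2⟩ := sqVal_inj n _ _ _ _ h
    have h1 := pos_inj n a (d_inj n h1)
    have h2 := (Equiv.swap b (midCol n b)).injective (Fin.succ_injective _ h2)
    simp only at h1 h2
    rw [h1, h2]

theorem labVal_zero (hn : 1 ≤ n) : labVal n a b (Sum.inr (a, b)) = 0 := by
  simp only [labVal, pos, sub_self, zero_add, dFun_invol, Equiv.swap_apply_left]
  exact sqVal_eq_zero n hn _ _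

theorem labVal_lt (p) : labVal n a b p < (2 * n + 1) * (2 * n + 1) := by
  rcases p with u | ⟨u, j⟩ <;> exact sqVal_lt _ _ _

theorem lab_edgeMap (hn : 1 ≤ n) (p) : lab n a b (edgeMap n p) = labVal n a b p :=
  (edgeMap_inj n hn).extend_apply _ _ _

/-- The graph with the edge deleted. -/
abbrev DG : SimpleGraph (Fin (2 * n + 1) ⊕ Fin (2 * n)) :=
  (joinG (cycleGraph (2 * n + 1)) (⊥ : SimpleGraph (Fin (2 * n)))).deleteEdges
      {s(Sum.inl a, Sum.inr b)}

theorem DG_edgeSet (hn : 1 ≤ n) : (DG n a b).edgeSet = edgeMap n '' {Sum.inr (a, b)}ᶜ := by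
  rw [SimpleGraph.edgeSet_deleteEdges, ← range_edgeMap n hn,
    Set.image_compl_eq_range_sdiff_image (edgeMap_inj n hn)]
  simp [edgeMap]

theorem DG_ncard (hn : 1 ≤ n) : (DG n a b).edgeSet.ncard = (2 * n + 1) * (2 * n + 1) - 1 := by
  rw [DG_edgeSet n a b hn, Set.ncard_image_of_injective _ (edgeMap_inj n hn), Set.ncard_compl,
    Set.ncard_singleton]
  simp only [Nat.card_eq_fintype_card, Fintype.card_sum, Fintype.card_prod, Fintype.card_fin]
  congr 1
  ring

theorem lab_bij (hn : 1 ≤ n) :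
    Set.BijOn (lab n a b) (DG n a b).edgeSet (Set.Icc 1 (DG n a b).edgeSet.ncard) := by
  have hinj : Set.InjOn (lab n a b) (DG n a b).edgeSet := by
    rw [DG_edgeSet n a b hn]
    rintro _ ⟨p, _, rfl⟩ _ ⟨q, _, rfl⟩ h
    rw [lab_edgeMap n a b hn, lab_edgeMap n a b hn] at h
    rw [labVal_inj n a b h]
  have hmaps : Set.MapsTo (lab n a b) (DG n a b).edgeSet
      (Set.Icc 1 (DG n a b).edgeSet.ncard) := by
    rw [DG_ncard n a b hn, DG_edgeSet n a b hn]
    rintro _ ⟨p, hp, rfl⟩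
    rw [lab_edgeMap n a b hn]
    have h1 := labVal_lt n a b p
    have h2 : labVal n a b p ≠ 0 := by
      rw [← labVal_zero n a b hn]
      intro h
      exact hp (labVal_inj n a b h)
    constructor <;> omega
  refine ⟨hmaps, hinj, ?_⟩
  have : lab n a b '' (DG n a b).edgeSet = Set.Icc 1 (DG n a b).edgeSet.ncard := by
    apply Set.eq_of_subset_of_ncard_le hmaps.image_subset
    rw [hinj.ncard_image]
    generalize (DG n a b).edgeSet.ncard = q
    rw [← Finset.coe_Icc, Set.ncard_coe_finset]
    simp
  exact this.ge

theorem weight_full (hn : 1 ≤ n) (x) : vertexWeight (DG n a b) (lab n a b) x =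
    ∑ y, if (HG n).Adj x y then lab n a b s(x, y) else 0 := by
  rw [vertexWeight_eq]
  apply Finset.sum_congr rfl
  intro y _
  by_cases h : (HG n).Adj x y
  · by_cases h2 : s(x, y) = s(Sum.inl a, Sum.inr b)
    · have h3 := lab_edgeMap n a b hn (Sum.inr (a, b))
      rw [labVal_zero n a b hn] at h3
      have h4 : lab n a b s(x, y) = 0 := by rw [h2]; exact h3
      rw [h4]; simp
    · have : (DG n a b).Adj x y := by
        rw [SimpleGraph.deleteEdges_adj]
        exact ⟨h, h2⟩
      rw [if_pos h, if_pos this]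
  · have : ¬ (DG n a b).Adj x y := by
      rw [SimpleGraph.deleteEdges_adj]
      exact fun hh => h hh.1
    rw [if_neg h, if_neg this]

theorem weight_inr (hn : 1 ≤ n) (k : Fin (2 * n)) :
    vertexWeight (DG n a b) (lab n a b) (Sum.inr k) = 2 * n * (n + 1) * (2 * n + 1) := by
  rw [weight_full n a b hn, Fintype.sum_sum_type]
  simp only [HG_rr, if_false, Finset.sum_const_zero, add_zero]
  rw [← sqVal_col n (Fin.succ (Equiv.swap b (midCol n b) k))]
  have hb : Function.Bijective (fun v => dFun n (pos n a v)) :=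
    Finite.injective_iff_bijective.mp ((d_inj n).comp (pos_inj n a))
  rw [← hb.sum_comp (fun i => sqVal n i (Fin.succ (Equiv.swap b (midCol n b) k)))]
  apply Finset.sum_congr rfl
  intro v _
  rw [if_pos (HG_lr n v k).symm, Sym2.eq_swap]
  exact lab_edgeMap n a b hn (Sum.inr (v, k))

theorem weight_inl (hn : 1 ≤ n) (v : Fin (2 * n + 1)) :
    vertexWeight (DG n a b) (lab n a b) (Sum.inl (v + 1)) +
      2 * n * ((dFun n (pos n a (v + 1))).val) =
     2 * n * (n + 1) * (2 * n + 1) + 2 * n * (n + 1 + (pos n a (v + 1)).val) := by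
  rw [weight_full n a b hn, Fintype.sum_sum_type]
  have h1 : (∑ k : Fin (2 * n), if (HG n).Adj (Sum.inl (v + 1)) (Sum.inr k) then
      lab n a b s(Sum.inl (v + 1), Sum.inr k) else 0) + 2 * n * ((dFun n (pos n a (v + 1))).val + 1)
      = 2 * n * (n + 1) * (2 * n + 1) := by
    rw [← sqVal_zero, ← sqVal_row n (dFun n (pos n a (v + 1))), Fin.sum_univ_succ, add_comm]
    congr 1
    rw [← Equiv.sum_comp (Equiv.swap b (midCol n b))
      (fun k => sqVal n (dFun n (pos n a (v + 1))) (Fin.succ k))]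
    apply Finset.sum_congr rfl
    intro k _
    rw [if_pos (HG_lr n (v + 1) k)]
    exact lab_edgeMap n a b hn (Sum.inr (v + 1, k))
  have h2 : (∑ u : Fin (2 * n + 1), if (HG n).Adj (Sum.inl (v + 1)) (Sum.inl u) then
      lab n a b s(Sum.inl (v + 1), Sum.inl u) else 0) =
      labVal n a b (Sum.inl v) + labVal n a b (Sum.inl (v + 1)) := by
    rw [← lab_edgeMap n a b hn, ← lab_edgeMap n a b hn]
    simp only [HG_ll n hn]
    have hne : v ≠ v + 1 + 1 := by
      have := two_ne_zero_fin n hn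
      rw [add_assoc]
      simpa using this
    have hf : Finset.univ.filter (fun u => u = v + 1 + 1 ∨ v + 1 = u + 1) = {v, v + 1 + 1} := by
      ext u
      simp only [Finset.mem_filter, Finset.mem_univ, true_and, Finset.mem_insert,
        Finset.mem_singleton, add_left_inj]
      tauto
    rw [← Finset.sum_filter, hf, Finset.sum_pair hne]
    simp only [edgeMap]
    rw [Sym2.eq_swap]
  rw [h2]
  simp only [labVal, sqVal_zero]
  have h3 := xFun_add n (pos n a v)
  rw [← pos_succ] at h3
  have h4 := congrArg (2 * n * ·) h3
  rw [← h1]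
  linear_combination h4

theorem weight_inl' (hn : 1 ≤ n) (v : Fin (2 * n + 1)) :
    vertexWeight (DG n a b) (lab n a b) (Sum.inl v) =
     2 * n * (n + 1) * (2 * n + 1) + 2 * n * (n +
      if (pos n a v).val = 2 * n then 1 else if (pos n a v).val % 2 = 0 then 0 else 2) := by
  have h := weight_inl n a b hn (v - 1)
  rw [sub_add_cancel, dFun_val] at h
  split_ifs at h ⊢ with h1 h2
  · linarith
  · linarith
  · obtain ⟨k, hk⟩ : ∃ k, (pos n a v).val = k + 1 := ⟨(pos n a v).val - 1, by omega⟩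
    rw [hk, Nat.add_sub_cancel] at h
    linarith

theorem lab_la (hn : 1 ≤ n) : IsLocalAntimagic (DG n a b) (lab n a b) := by
  refine ⟨lab_bij n a b hn, ?_⟩
  have key : ∀ v : Fin (2 * n + 1), vertexWeight (DG n a b) (lab n a b) (Sum.inl v) ≠
      vertexWeight (DG n a b) (lab n a b) (Sum.inl (v + 1)) := by
    intro v h
    rw [weight_inl' n a b hn, weight_inl' n a b hn, pos_succ, val_add_one] at h
    have h' := Nat.eq_of_mul_eq_mul_left (by omega) (Nat.add_left_cancel h)
    have := (pos n a v).is_lt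
    split_ifs at h' <;> omega
  have key2 : ∀ (v : Fin (2 * n + 1)) (k : Fin (2 * n)),
      vertexWeight (DG n a b) (lab n a b) (Sum.inl v) ≠
      vertexWeight (DG n a b) (lab n a b) (Sum.inr k) := by
    intro v k h
    rw [weight_inl' n a b hn, weight_inr n a b hn] at h
    have h' := Nat.mul_eq_zero.mp (Nat.add_eq_left.mp h)
    omega
  intro x y hxy
  have h := (SimpleGraph.deleteEdges_adj.mp hxy).1
  rcases x with u | j <;> rcases y with v | k
  · rcases (HG_ll n hn u v).mp h with rfl | rfl
    · exact key u
    · exact (key v).symm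
  · exact key2 u k
  · exact (key2 v j).symm
  · exact absurd h (HG_rr n j k)

theorem lab_count (hn : 1 ≤ n) : colorCount (DG n a b) (lab n a b) ≤ 4 := by
  unfold colorCount
  set M := 2 * n * (n + 1) * (2 * n + 1) with hM
  refine (Finset.card_le_card (t := {M, M + 2 * n * (n + 1), M + 2 * n * (n + 0),
    M + 2 * n * (n + 2)}) ?_).trans Finset.card_le_four
  intro w hw
  obtain ⟨x, _, rfl⟩ := Finset.mem_image.mp hw
  rcases x with v | k
  · rw [weight_inl' n a b hn]
    split_ifs <;> simp [hM]
  · rw [weight_inr n a b hn]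
    simp [hM]

theorem count_ge (hn : 1 ≤ n) (f) (hf : IsLocalAntimagic (DG n a b) f) :
    4 ≤ colorCount (DG n a b) f := by
  by_contra hlt
  push Not at hlt
  obtain ⟨k, hk⟩ : ∃ k : Fin (2 * n), k ≠ b := by
    have : Nontrivial (Fin (2 * n)) := Fin.nontrivial_iff_two_le.mpr (by omega)
    exact exists_ne b
  set w := vertexWeight (DG n a b) f with hw
  set S := (Finset.univ.image w).erase (w (Sum.inr k)) with hS
  have hcard : S.card ≤ 2 := by
    rw [hS, Finset.card_erase_of_mem (Finset.mem_image_of_mem _ (Finset.mem_univ _))]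
    change (Finset.univ.image w).card < 4 at hlt
    omega
  have hmem : ∀ v : Fin (2 * n + 1), w (Sum.inl v) ∈ S := by
    intro v
    refine Finset.mem_erase.mpr ⟨?_, Finset.mem_image_of_mem _ (Finset.mem_univ _)⟩
    apply hf.2
    rw [SimpleGraph.deleteEdges_adj]
    refine ⟨HG_lr n v k, ?_⟩
    simp [hk]
  let C : (cycleGraph (2 * n + 1)).Coloring S := SimpleGraph.Coloring.mk
    (fun v => ⟨w (Sum.inl v), hmem v⟩) (by
      intro u v huv h
      refine hf.2 (x := Sum.inl u) (y := Sum.inl v) ?_ (congrArg Subtype.val h)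
      rw [SimpleGraph.deleteEdges_adj]
      refine ⟨(HG_ll n hn u v).mpr ((cyc_adj n hn u v).mp huv), ?_⟩
      simp)
  have hc := C.colorable.chromaticNumber_le
  rw [SimpleGraph.chromaticNumber_cycleGraph_of_odd _ (by omega) ⟨n, rfl⟩, Fintype.card_coe] at hc
  have : 3 ≤ S.card := by exact_mod_cast hc
  omega

end lab

/-- Theorem: For every integer `n ≥ 1` and every join edge `e` of `C_{2n+1} ∨ O_{2n}` (i.e.
every edge joining a vertex of the cycle with a vertex of the null graph; these are exactly
the edges not lying on the cycle), `χ_la((C_{2n+1} ∨ O_{2n}) − e) = 4`. -/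
theorem chiLA_oddCycle_join_null_even_deleteJoinEdge (n : ℕ) (hn : 1 ≤ n)
    (a : Fin (2 * n + 1)) (b : Fin (2 * n)) :
    chiLA ((joinG (cycleGraph (2 * n + 1)) (⊥ : SimpleGraph (Fin (2 * n)))).deleteEdges
      {s(Sum.inl a, Sum.inr b)}) = 4 := by
  have h4 : colorCount (DG n a b) (lab n a b) = 4 :=
    le_antisymm (lab_count n a b hn) (count_ge n a b hn _ (lab_la n a b hn))
  apply le_antisymm
  · exact Nat.sInf_le ⟨lab n a b, lab_la n a b hn, h4⟩
  · apply le_csInf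
    · exact ⟨4, lab n a b, lab_la n a b hn, h4⟩
    · rintro _ ⟨f, hf, rfl⟩
      exact count_ge n a b hn f hf
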